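/- Let d ≥ 2 and let u : ℤ^d → [0,∞) be admissible. Then u and its Schwarz rearrangement u* = R_{ℤ^d} u are equimeasurable, i.e. |{x : u(x) > t}| = |{x : u*(x) > t}| for every t > 0. -/

import Mathlib

open Filter Topology

noncomputable section

abbrev ZLat (d : ℕ) := Fin d → ℤ

def stdVec (d : ℕ) (i : Fin d) : Fin d → ℝ := fun j => if j = i then 1 else 0

/-- The set of directions E⃗ ⊆ ℝ^d. -/
def Evec (d : ℕ) : Set (Fin d → ℝ) :=
  {e | (∃ i, e = stdVec d i) ∨
    (∃ i j : Fin d, i < j ∧ e = fun k => (stdVec d i k + stdVec d j k) / 2) ∨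
    (∃ i j : Fin d, i < j ∧ e = fun k => (stdVec d i k - stdVec d j k) / 2)}

/-- A fixed enumeration of E⃗ (for d = 2 it is e₁, e₂, (e₁+e₂)/2, (e₁-e₂)/2). -/
def EvecList (d : ℕ) : List (Fin d → ℝ) :=
  ((List.finRange d).map (stdVec d)) ++
  ((List.finRange d).flatMap fun i => (List.finRange d).filterMap fun j =>
    if i < j then some (fun k => (stdVec d i k + stdVec d j k) / 2) else none) ++
  ((List.finRange d).flatMap fun i => (List.finRange d).filterMap fun j =>
    if i < j then some (fun k => (stdVec d i k - stdVec d j k) / 2) else none)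

/-- The n-th largest value of `u`, counted with multiplicity (1-indexed). -/
def nthLargest {α : Type*} (u : α → NNReal) (n : ℕ) : NNReal :=
  sSup {t | ∃ Ω : Finset α, Ω.card = n ∧ ∀ x ∈ Ω, t ≤ u x}

/-- The 1-indexed position of the point with doubled coordinate `m` in the
spiral order 0, 1, −1, 2, −2, … (for even m) resp. 1/2, −1/2, 3/2, −3/2, … (for odd m). -/
def posIdx (m : ℤ) : ℕ := (if 0 < m then m else 1 - m).toNat

/-- `x` and `y` lie on a common line with direction `e`. -/
def sameLine {d : ℕ} (e : Fin d → ℝ) (x y : ZLat d) : Prop :=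
  ∃ c : ℝ, (fun i => (x i : ℝ) - (y i : ℝ)) = c • e

/-- Twice the inner product ⟨e, x⟩, as an integer. -/
def pairing {d : ℕ} (e : Fin d → ℝ) (x : ZLat d) : ℤ :=
  ⌊2 * ∑ i, e i * (x i : ℝ)⌋

/-- One-step rearrangement `R_e`. -/
def stepR {d : ℕ} (e : Fin d → ℝ) (u : ZLat d → NNReal) : ZLat d → NNReal :=
  fun x => nthLargest (fun y : {y : ZLat d // sameLine e x y} => u y.1) (posIdx (pairing e x))

/-- `R^k u` : k successive one-step rearrangements cycling through the fixed enumeration. -/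
def iterR (d : ℕ) (u : ZLat d → NNReal) : ℕ → ZLat d → NNReal
  | 0 => u
  | k + 1 => stepR ((EvecList d).getD (k % (EvecList d).length) 0) (iterR d u k)

/-- The Schwarz rearrangement on ℤ^d : pointwise limit of `R^k u`. -/
def RZd (d : ℕ) (u : ZLat d → NNReal) : ZLat d → NNReal :=
  fun x => limUnder atTop fun k => iterR d u k x

def Admissible {α : Type*} (u : α → NNReal) : Prop :=
  ∀ t : NNReal, 0 < t → {x | t < u x}.Finite

def Equimeasurable {α : Type*} (u v : α → NNReal) : Prop :=
  ∀ t : NNReal, 0 < t → Nonempty ({x | t < u x} ≃ {x | t < v x})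

/-- Graph distance (ℓ¹ distance) on the lattice ℤ^d. -/
def latDist {d : ℕ} (x y : ZLat d) : ℕ := ∑ i, (x i - y i).natAbs

/-- The i-th standard basis vector of ℤ^d. -/
def latE {d : ℕ} (i : Fin d) : ZLat d := fun j => if j = i then 1 else 0

/-- ‖∇u‖_p^p : the p-Sobolev energy, summing over each edge {x, x+e_i} once. -/
def gradEnergy (d : ℕ) (p : ℝ) (u : ZLat d → NNReal) : ENNReal :=
  ∑' (x : ZLat d) (i : Fin d), ENNReal.ofReal (|(u (x + latE i) : ℝ) - (u x : ℝ)| ^ p)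

/-- ‖∇u‖_p. -/
def gradNorm (d : ℕ) (p : ℝ) (u : ZLat d → NNReal) : ENNReal :=
  gradEnergy d p u ^ (1 / p)

/-- Graph automorphism of the lattice graph ℤ^d. -/
def IsLatAuto {d : ℕ} (σ : ZLat d ≃ ZLat d) : Prop :=
  ∀ x y : ZLat d, latDist (σ x) (σ y) = 1 ↔ latDist x y = 1

def Supermodular (G : NNReal → NNReal → NNReal) : Prop :=
  ∀ s t s₀ t₀ : NNReal, G (s + s₀) t + G s (t + t₀) ≤ G (s + s₀) (t + t₀) + G s t

def StrictlySupermodular (G : NNReal → NNReal → NNReal) : Prop :=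
  ∀ s t s₀ t₀ : NNReal, 0 < s₀ → 0 < t₀ →
    G (s + s₀) t + G s (t + t₀) < G (s + s₀) (t + t₀) + G s t

/-- The values of `u` are strictly decreasing: a₁ > a₂ > a₃ > ⋯ . -/
def StrictRan {α : Type*} (u : α → NNReal) : Prop :=
  ∀ n : ℕ, 0 < n → nthLargest u (n + 1) < nthLargest u n

/-!
Each direction in E⃗ is `v / |v|²` for a positive root `v` of `B_d`, and the order
`0, 1, -1, 2, -2, …` on a line of direction `v` is the order of increasing distance to a fixed point
`a` of the open fundamental alcove. A one-step rearrangement therefore turns a superlevel set into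
one of the same cardinality which, unless nothing changes, has a strictly smaller sum of suitably
scaled, integer-valued squared distances to `a`. Hence every superlevel set is eventually constant
along the iteration, and this forces pointwise convergence: no value oscillates across two levels.
Finally `{u > t} = {u > s}` for some `s > t`, so by cardinality the eventual superlevel sets at `s`
and at `t` coincide, and the limit `u*` has the same superlevel set at `t`.
-/

open Finset in
theorem sum_lt_sum_of_card_eq_of_forall_sdiff_lt {α M : Type*} [DecidableEq α] [AddCommMonoid M]
    [LinearOrder M] [IsOrderedCancelAddMonoid M] {P : α → M} {s t : Finset α}
    (hcard : #t = #s) (hne : t ≠ s) (h : ∀ b ∈ t \ s, ∀ a ∈ s \ t, P b < P a) :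
    ∑ x ∈ t, P x < ∑ x ∈ s, P x := by
  have hts : (t \ s).Nonempty :=
    sdiff_nonempty.2 fun hsub => hne (eq_of_subset_of_card_le hsub hcard.ge)
  have hst : (s \ t).Nonempty := by rwa [← card_pos, ← card_sdiff_comm hcard, card_pos]
  obtain ⟨b, hb, hmax⟩ := exists_max_image (t \ s) P hts
  rw [← sum_sdiff_lt_sum_sdiff]
  calc ∑ x ∈ t \ s, P x ≤ #(t \ s) • P b := sum_le_card_nsmul _ _ _ hmax
    _ = ∑ _x ∈ s \ t, P b := by rw [sum_const, card_sdiff_comm hcard]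
    _ < ∑ x ∈ s \ t, P x := sum_lt_sum_of_nonempty hst (h b hb)

open Finset in
theorem sum_lt_sum_of_fiberwise_card_eq {α κ M : Type*} [DecidableEq α] [DecidableEq κ]
    [AddCommMonoid M] [LinearOrder M] [IsOrderedCancelAddMonoid M] {π : α → κ} {P : α → M}
    {s t : Finset α} (hcard : ∀ c, #{x ∈ t | π x = c} = #{x ∈ s | π x = c}) (hne : t ≠ s)
    (h : ∀ b ∈ t \ s, ∀ a ∈ s \ t, π b = π a → P b < P a) :
    ∑ x ∈ t, P x < ∑ x ∈ s, P x := by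
  have hfiber (c : κ) (hc : {x ∈ t | π x = c} ≠ {x ∈ s | π x = c}) :
      ∑ x ∈ t with π x = c, P x < ∑ x ∈ s with π x = c, P x := by
    refine sum_lt_sum_of_card_eq_of_forall_sdiff_lt (hcard c) hc fun b hb a ha => ?_
    exact h b (by grind) a (by grind) (by grind)
  obtain ⟨c, hc⟩ : ∃ c, {x ∈ t | π x = c} ≠ {x ∈ s | π x = c} := by
    contrapose! hne
    ext x
    simpa using Finset.ext_iff.1 (hne (π x)) x
  have hcmem : c ∈ (t ∪ s).image π := by
    contrapose! hc
    rw [filter_eq_empty_iff.2, filter_eq_empty_iff.2] <;> grind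
  rw [← sum_fiberwise_of_maps_to (t := (t ∪ s).image π) (g := π) (by grind),
    ← sum_fiberwise_of_maps_to (s := s) (t := (t ∪ s).image π) (g := π) (by grind)]
  refine sum_lt_sum (fun c' _ => ?_) ⟨c, hcmem, hfiber c hc⟩
  rcases eq_or_ne {x ∈ t | π x = c'} {x ∈ s | π x = c'} with heq | hne'
  · rw [heq]
  · exact (hfiber c' hne').le

theorem nonempty_equiv_of_fiberwise {α β κ : Type*} (f : α → κ) (g : β → κ)
    (h : ∀ c, Nonempty ({x // f x = c} ≃ {y // g y = c})) : Nonempty (α ≃ β) :=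
  ⟨(Equiv.sigmaFiberEquiv f).symm.trans <|
    (Equiv.sigmaCongrRight fun c => (h c).some).trans (Equiv.sigmaFiberEquiv g)⟩

section Compression

variable {α κ : Type*}

/-- Every fibre of `π` is numbered by `1, 2, 3, …` through `pos`. With the lines of a given
direction as fibres, this is the order in which a rearrangement fills each line. -/
def IsFiberwiseEnumeration (π : α → κ) (pos : α → ℕ) : Prop :=
  ∀ c, Set.BijOn pos (π ⁻¹' {c}) (Set.Ici 1)

/-- The compression of `A`: in each fibre of `π`, the points of `A` are replaced by as many points
at the positions `1, 2, 3, …`. It is how a one-step rearrangement acts on superlevel sets. -/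
def compress (π : α → κ) (pos : α → ℕ) (A : Set α) : Set α :=
  {x | pos x ≤ (A ∩ π ⁻¹' {π x}).encard}

variable {π : α → κ} {pos : α → ℕ} {A : Set α}

theorem IsFiberwiseEnumeration.nonempty_compress_fiber_equiv
    (hpos : IsFiberwiseEnumeration π pos) (hA : A.Finite) (c : κ) :
    Nonempty ((compress π pos A ∩ π ⁻¹' {c} : Set α) ≃ (A ∩ π ⁻¹' {c} : Set α)) := by
  have hAc : (A ∩ π ⁻¹' {c}).Finite := hA.inter_of_left _
  set n := (A ∩ π ⁻¹' {c}).ncard with hn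
  have hset : compress π pos A ∩ π ⁻¹' {c} = π ⁻¹' {c} ∩ pos ⁻¹' Set.Icc 1 n := by
    ext x
    refine and_comm.trans (and_congr_right fun hx => ?_)
    obtain rfl : π x = c := hx
    simp [compress, ← hAc.cast_ncard_eq, hn, Set.mem_Ici.1 ((hpos (π x)).mapsTo rfl)]
  have hbij : Set.BijOn pos (compress π pos A ∩ π ⁻¹' {c}) (Set.Icc 1 n) :=
    hset ▸ (hpos c).subset_right Set.Icc_subset_Ici_self
  have := hAc.to_subtype
  have hcard : Nonempty (Set.Icc 1 n ≃ (A ∩ π ⁻¹' {c} : Set α)) := by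
    rw [← Finite.card_eq, Nat.card_coe_set_eq, Nat.card_coe_set_eq, ← hn]
    simp
  exact hcard.map hbij.equiv.trans

theorem IsFiberwiseEnumeration.nonempty_equiv_compress (hpos : IsFiberwiseEnumeration π pos)
    (hA : A.Finite) : Nonempty (A ≃ compress π pos A) :=
  nonempty_equiv_of_fiberwise (fun x : A => π x) (fun x : compress π pos A => π x) fun c =>
    (hpos.nonempty_compress_fiber_equiv hA c).map fun e =>
      (Equiv.subtypeSubtypeEquivSubtypeInter _ _).trans <|
        e.symm.trans (Equiv.subtypeSubtypeEquivSubtypeInter _ _).symm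

theorem pos_lt_of_mem_compress_of_notMem {a b : α} (hab : π b = π a)
    (hb : b ∈ compress π pos A) (ha : a ∉ compress π pos A) : pos b < pos a := by
  have hb' : (pos b : ℕ∞) ≤ (A ∩ π ⁻¹' {π a}).encard := hab ▸ hb
  exact_mod_cast hb'.trans_lt (not_le.1 ha)

theorem IsFiberwiseEnumeration.finsum_compress_lt {M : Type*} [AddCommMonoid M] [LinearOrder M]
    [IsOrderedCancelAddMonoid M] {P : α → M} (hpos : IsFiberwiseEnumeration π pos)
    (hP : ∀ x y, π x = π y → pos x < pos y → P x < P y) (hA : A.Finite)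
    (hne : compress π pos A ≠ A) :
    ∑ᶠ x ∈ compress π pos A, P x < ∑ᶠ x ∈ A, P x := by
  classical
  have hfiber := hpos.nonempty_compress_fiber_equiv hA
  obtain ⟨e⟩ := hpos.nonempty_equiv_compress hA
  obtain ⟨B, hB⟩ := (e.set_finite_iff.1 hA).exists_finset_coe
  have hlt {a b : α} (hab : π b = π a) (hb : b ∈ B) (ha : a ∉ B) : P b < P a :=
    hP b a hab <| pos_lt_of_mem_compress_of_notMem hab (hB.le hb) fun h => ha (hB.ge h)
  lift A to Finset α using hA
  rw [← hB] at hne hfiber ⊢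
  rw [finsum_mem_coe_finset, finsum_mem_coe_finset]
  refine sum_lt_sum_of_fiberwise_card_eq (π := π) (fun c => ?_) (mod_cast hne)
    fun b hb a ha hab => hlt hab (Finset.mem_sdiff.1 hb).1 (Finset.mem_sdiff.1 ha).2
  obtain ⟨e⟩ := hfiber c
  simp only [← Set.ncard_coe_finset, Finset.coe_filter]
  exact Set.ncard_congr' e

end Compression

section NthLargest

variable {α : Type*} {u : α → NNReal}

theorem Admissible.bddAbove_range (hu : Admissible u) : BddAbove (Set.range u) := by
  obtain ⟨M, hM⟩ := ((hu 1 one_pos).image u).bddAbove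
  refine ⟨max 1 M, Set.forall_mem_range.2 fun x => ?_⟩
  rcases le_or_gt (u x) 1 with h | h
  · exact le_max_of_le_left h
  · exact le_max_of_le_right (hM ⟨x, h, rfl⟩)

theorem lt_nthLargest_iff (hu : BddAbove (Set.range u)) {n : ℕ} (hn : n ≠ 0) (t : NNReal) :
    t < nthLargest u n ↔ (n : ℕ∞) ≤ {x | t < u x}.encard := by
  constructor
  · intro h
    obtain ⟨s, ⟨Ω, rfl, hΩ⟩, hts⟩ := exists_lt_of_lt_csSup' h
    rw [← Set.encard_coe_eq_coe_finsetCard]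
    exact Set.encard_le_encard fun x hx => hts.trans_le (hΩ x hx)
  · intro h
    obtain ⟨s, hs, hsn⟩ := Set.exists_subset_encard_eq h
    obtain ⟨Ω, rfl⟩ := (Set.finite_of_encard_eq_coe hsn).exists_finset_coe
    have hcard : Ω.card = n := by exact_mod_cast (Set.encard_coe_eq_coe_finsetCard Ω).symm.trans hsn
    obtain ⟨x, hx, hmin⟩ := Ω.exists_min_image u (Finset.card_ne_zero.1 (hcard ▸ hn))
    refine (hs hx).trans_le (le_csSup ?_ ⟨Ω, hcard, hmin⟩)
    obtain ⟨M, hM⟩ := hu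
    refine ⟨M, ?_⟩
    rintro r ⟨Ω', hΩ', hr⟩
    obtain ⟨y, hy⟩ := Finset.card_ne_zero.1 (hΩ' ▸ hn)
    exact (hr y hy).trans (hM ⟨y, rfl⟩)

theorem lt_nthLargest_subtype_iff (hu : BddAbove (Set.range u)) {n : ℕ} (hn : n ≠ 0) (t : NNReal)
    (p : α → Prop) :
    t < nthLargest (fun y : {y // p y} => u y) n ↔
      (n : ℕ∞) ≤ ({x | t < u x} ∩ {x | p x}).encard := by
  have hbdd : BddAbove (Set.range fun y : {y // p y} => u y) :=
    hu.mono (Set.range_comp_subset_range Subtype.val u)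
  rw [lt_nthLargest_iff hbdd hn, ← Subtype.val_injective.encard_image]
  congr!
  ext x
  simp [and_comm]

end NthLargest

section Limits

variable {ι α : Type*} {l : Filter ι} {u v : α → NNReal} {w : ι → α → NNReal}

theorem Equimeasurable.admissible (h : Equimeasurable u v) (hu : Admissible u) : Admissible v :=
  fun t ht => (h t ht).some.set_finite_iff.1 (hu t ht)

theorem Equimeasurable.trans {v' : α → NNReal} (h : Equimeasurable u v)
    (h' : Equimeasurable v v') : Equimeasurable u v' :=
  fun t ht => ⟨(h t ht).some.trans (h' t ht).some⟩

theorem Equimeasurable.le_of_forall_le (h : Equimeasurable u v) {M : NNReal} (hM : 0 < M)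
    (hu : ∀ x, u x ≤ M) (x : α) : v x ≤ M := by
  by_contra! hx
  exact (hu _).not_gt ((h M hM).some.symm ⟨x, hx⟩).2

theorem Admissible.exists_gt_superlevel_eq (hu : Admissible u) {t : NNReal} (ht : 0 < t) :
    ∃ s > t, {x | s < u x} = {x | t < u x} := by
  rcases {x | t < u x}.eq_empty_or_nonempty with hempty | hne
  · have hle (x : α) : u x ≤ t := not_lt.1 fun hx => (hempty ▸ hx : x ∈ (∅ : Set α))
    refine ⟨t + 1, lt_add_one t, ?_⟩
    rw [hempty, Set.eq_empty_iff_forall_notMem]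
    exact fun x hx => ((hle x).trans_lt (lt_add_one t)).not_gt hx
  · obtain ⟨x₀, hx₀, hmin⟩ := Set.exists_min_image _ u (hu t ht) hne
    obtain ⟨s, hts, hs⟩ := exists_between (show t < u x₀ from hx₀)
    exact ⟨s, hts, Set.ext fun x => ⟨hts.trans, fun hx => hs.trans_le (hmin x hx)⟩⟩

theorem exists_tendsto_of_eventuallyConst_lt {f : ι → NNReal}
    (hbdd : l.IsBoundedUnder (· ≤ ·) f)
    (hconst : ∀ t > 0, EventuallyConst (fun k => t < f k) l) : ∃ c, Tendsto f l (𝓝 c) := by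
  refine tendsto_of_no_upcrossings dense_univ ?_ hbdd ⟨0, by simp⟩
  rintro a - b - hab ⟨hlt, hgt⟩
  obtain ⟨k, hk⟩ := hlt.exists
  rcases eventuallyConst_pred.1 (hconst a (pos_of_gt hk)) with h | h
  · exact hlt (h.mono fun _ h => h.not_gt)
  · exact hgt (h.mono fun _ h h' => h (hab.trans h'))

theorem Admissible.equimeasurable_of_tendsto [l.NeBot] (hu : Admissible u)
    (hw : ∀ k, Equimeasurable u (w k))
    (hconst : ∀ t > 0, EventuallyConst (fun k => {x | t < w k x}) l)
    (hv : ∀ x, Tendsto (w · x) l (𝓝 (v x))) : Equimeasurable u v := by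
  intro t ht
  obtain ⟨s, hts, hs⟩ := hu.exists_gt_superlevel_eq ht
  have hs0 : 0 < s := ht.trans hts
  obtain ⟨T, hT⟩ := eventuallyConst_iff_exists_eventuallyEq.1 (hconst t ht)
  obtain ⟨S, hS⟩ := eventuallyConst_iff_exists_eventuallyEq.1 (hconst s hs0)
  obtain ⟨k, rfl, rfl⟩ := (hT.and hS).exists
  have hTk : ∀ᶠ j in l, ∀ x, t < w j x ↔ t < w k x := hT.mono fun _ => Set.ext_iff.1
  have hSk : ∀ᶠ j in l, ∀ x, s < w j x ↔ s < w k x := hS.mono fun _ => Set.ext_iff.1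
  have hST : {x | s < w k x} = {x | t < w k x} := by
    refine Set.eq_of_subset_of_ncard_le (fun x => hts.trans) ?_ ((hw k).admissible hu t ht)
    rw [← Set.ncard_congr' (hw k t ht).some, ← Set.ncard_congr' (hw k s hs0).some, hs]
  have hlevel : {x | t < v x} = {x | t < w k x} := by
    ext x
    constructor
    · intro hx
      obtain ⟨j, hj, hjx⟩ := (hTk.and ((hv x).eventually (lt_mem_nhds hx))).exists
      exact (hj x).1 hjx
    · intro hx
      have hxs : s < w k x := hST.ge hx
      exact hts.trans_le (ge_of_tendsto (hv x) (hSk.mono fun j hj => ((hj x).2 hxs).le))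
  exact hlevel ▸ hw k t ht

theorem Admissible.exists_tendsto_equimeasurable [l.NeBot] (hu : Admissible u)
    (hw : ∀ k, Equimeasurable u (w k))
    (hconst : ∀ t > 0, EventuallyConst (fun k => {x | t < w k x}) l) :
    ∃ v, (∀ x, Tendsto (w · x) l (𝓝 (v x))) ∧ Equimeasurable u v := by
  obtain ⟨M, hM⟩ := hu.bddAbove_range
  have hwM (k : ι) (x : α) : w k x ≤ max 1 M :=
    (hw k).le_of_forall_le (by positivity) (fun x => le_max_of_le_right (hM ⟨x, rfl⟩)) x
  choose v hv using fun x => exists_tendsto_of_eventuallyConst_lt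
    (isBoundedUnder_of ⟨max 1 M, (hwM · x)⟩) fun t ht => (hconst t ht).comp (x ∈ ·)
  exact ⟨v, hv, hu.equimeasurable_of_tendsto hw hconst hv⟩

theorem eventuallyConst_of_ne_imp_lt {β γ : Type*} [PartialOrder γ] [WellFoundedLT γ]
    {a : ℕ → β} (E : β → γ) (h : ∀ k, a (k + 1) ≠ a k → E (a (k + 1)) < E (a k)) :
    EventuallyConst a atTop := by
  have hle (k : ℕ) : E (a (k + 1)) ≤ E (a k) := by
    rcases eq_or_ne (a (k + 1)) (a k) with heq | hne
    · rw [heq]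
    · exact (h k hne).le
  have hanti : Monotone fun k => OrderDual.toDual (E (a k)) := monotone_nat_of_le_succ hle
  obtain ⟨n, hn⟩ := WellFoundedGT.monotone_chain_condition ⟨_, hanti⟩
  refine eventuallyConst_atTop_nat.2 ⟨n, fun m hm => ?_⟩
  by_contra hne
  exact (h m hne).ne ((hn (m + 1) (by lia)).symm.trans (hn m hm))

end Limits

section PosIdx

theorem one_le_posIdx (m : ℤ) : 1 ≤ posIdx m := by
  grind [posIdx]

theorem posIdx_add_two_mul_injective (m : ℤ) :
    Function.Injective fun c : ℤ => posIdx (m + 2 * c) := by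
  intro c c' h
  grind [posIdx]

theorem exists_posIdx_add_two_mul_eq (m : ℤ) {n : ℕ} (hn : 1 ≤ n) :
    ∃ c : ℤ, posIdx (m + 2 * c) = n := by
  rcases Int.even_or_odd' (m - n) with ⟨k, hk | hk⟩
  · exact ⟨-k, by grind [posIdx]⟩
  · exact ⟨-k - n, by grind [posIdx]⟩

theorem posIdx_lt_posIdx_add_two_mul {m c : ℤ} (h : posIdx m < posIdx (m + 2 * c)) :
    (0 < c ∧ 0 < m + c) ∨ (c < 0 ∧ m + c ≤ 0) := by
  grind [posIdx]

end PosIdx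

section Geometry

variable {d : ℕ} {v : ZLat d}

/-- A strictly dominant weight of the root system `B_d`. -/
def dominantWeight (d : ℕ) : ZLat d := fun i => d - i

/-- The positive roots of the root system `B_d` on `ℤ^d`: the vectors of squared length `1` or `2`
(that is `±e_i` and `±e_i ± e_j`) that are positive on the dominant weight. -/
structure IsPositiveRoot (v : ZLat d) : Prop where
  sq_length : v ⬝ᵥ v = 1 ∨ v ⬝ᵥ v = 2
  weight_pos : 0 < dominantWeight d ⬝ᵥ v

/-- Half the coroot `2v / |v|²` of `v`. The directions in `Evec d` are the half-coroots of the
positive roots. -/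
def halfCoroot (v : ZLat d) : Fin d → ℝ := fun i => v i / (v ⬝ᵥ v : ℤ)

theorem exists_isPositiveRoot_of_mem_Evec {e : Fin d → ℝ} (he : e ∈ Evec d) :
    ∃ v, IsPositiveRoot v ∧ e = halfCoroot v := by
  rcases he with ⟨i, rfl⟩ | ⟨i, j, hij, rfl⟩ | ⟨i, j, hij, rfl⟩
  · have hlen : (Pi.single i 1 : ZLat d) ⬝ᵥ Pi.single i 1 = 1 := by simp
    refine ⟨Pi.single i 1, ⟨.inl hlen, by simp [dominantWeight]⟩, funext fun k => ?_⟩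
    simp [halfCoroot, stdVec, Pi.single_apply]
  · have hlen :
        (Pi.single i 1 + Pi.single j 1 : ZLat d) ⬝ᵥ (Pi.single i 1 + Pi.single j 1) = 2 := by
      simp [hij.ne, hij.ne']
    have hweight : dominantWeight d ⬝ᵥ (Pi.single i 1 + Pi.single j 1) = (d - i) + (d - j) := by
      simp [dominantWeight]
    refine ⟨Pi.single i 1 + Pi.single j 1, ⟨.inr hlen, by omega⟩, funext fun k => ?_⟩
    simp only [halfCoroot, hlen]
    simp [stdVec, Pi.single_apply]
  · have hlen :
        (Pi.single i 1 - Pi.single j 1 : ZLat d) ⬝ᵥ (Pi.single i 1 - Pi.single j 1) = 2 := by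
      simp [hij.ne, hij.ne']
    have hweight : dominantWeight d ⬝ᵥ (Pi.single i 1 - Pi.single j 1) = (d - i) - (d - j) := by
      simp [dominantWeight]
    refine ⟨Pi.single i 1 - Pi.single j 1, ⟨.inr hlen, by omega⟩, funext fun k => ?_⟩
    simp only [halfCoroot, hlen]
    simp [stdVec, Pi.single_apply]

theorem dominantWeight_dotProduct_le (v : ZLat d) : dominantWeight d ⬝ᵥ v ≤ d * (v ⬝ᵥ v) := by
  rw [dotProduct, dotProduct, Finset.mul_sum]
  refine Finset.sum_le_sum fun i _ => ?_
  have hv : v i ≤ v i * v i := by simpa only [sq] using Int.le_self_sq (v i)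
  have hw : 0 ≤ dominantWeight d i ∧ dominantWeight d i ≤ d := by simp [dominantWeight]
  nlinarith [mul_self_nonneg (v i)]

theorem IsPositiveRoot.sq_length_pos (hv : IsPositiveRoot v) : 0 < v ⬝ᵥ v := by
  rcases hv.sq_length with h | h <;> lia

theorem IsPositiveRoot.exists_mul_self_eq_one (hv : IsPositiveRoot v) : ∃ i, v i * v i = 1 := by
  obtain ⟨i, -, hi⟩ : ∃ i ∈ Finset.univ, v i * v i ≠ 0 :=
    Finset.exists_ne_zero_of_sum_ne_zero hv.sq_length_pos.ne'
  have hle : v i * v i ≤ v ⬝ᵥ v :=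
    Finset.single_le_sum (f := fun j => v j * v j) (fun j _ => mul_self_nonneg _)
      (Finset.mem_univ i)
  have hle2 : v i * v i ≤ 2 := by rcases hv.sq_length with h | h <;> lia
  have hlt : v i < 2 := by nlinarith
  have hgt : -2 < v i := by nlinarith
  exact ⟨i, by interval_cases v i <;> simp_all⟩

theorem IsPositiveRoot.sameLine_iff (hv : IsPositiveRoot v) {x y : ZLat d} :
    sameLine (halfCoroot v) x y ↔ ∃ c : ℤ, y = x + c • v := by
  have hV : ((v ⬝ᵥ v : ℤ) : ℝ) ≠ 0 := mod_cast hv.sq_length_pos.ne'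
  constructor
  · rintro ⟨c, hc⟩
    obtain ⟨i, hi⟩ := hv.exists_mul_self_eq_one
    have hcoord (k : Fin d) : (x k - y k : ℝ) = c / (v ⬝ᵥ v : ℤ) * v k := by
      have := congrFun hc k
      simp only [halfCoroot, Pi.smul_apply, smul_eq_mul] at this
      rw [this]; ring
    have hiR : (v i * v i : ℝ) = 1 := mod_cast hi
    refine ⟨(y i - x i) * v i, funext fun k => ?_⟩
    have hk : (x k - y k : ℝ) = (x i - y i) * v i * v k := by
      rw [hcoord k, hcoord i]
      linear_combination -(c / ((v ⬝ᵥ v : ℤ) : ℝ) * v k) * hiR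
    have hk' : x k - y k = (x i - y i) * v i * v k := mod_cast hk
    simp only [Pi.add_apply, Pi.smul_apply, smul_eq_mul]
    linear_combination -hk'
  · rintro ⟨c, rfl⟩
    refine ⟨-c * (v ⬝ᵥ v : ℤ), funext fun k => ?_⟩
    simp only [halfCoroot, Pi.add_apply, Pi.smul_apply, smul_eq_mul]
    field_simp
    push_cast
    ring

theorem IsPositiveRoot.pairing_mul (hv : IsPositiveRoot v) (x : ZLat d) :
    pairing (halfCoroot v) x * (v ⬝ᵥ v) = 2 * (v ⬝ᵥ x) := by
  have hsum : 2 * ∑ i, halfCoroot v i * (x i : ℝ) = 2 * (v ⬝ᵥ x : ℤ) / (v ⬝ᵥ v : ℤ) := by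
    simp only [halfCoroot, dotProduct, Int.cast_sum, Int.cast_mul, Finset.mul_sum, Finset.sum_div]
    exact Finset.sum_congr rfl fun i _ => by ring
  rw [pairing, hsum]
  rcases hv.sq_length with h | h <;> rw [h]
  · rw [Int.cast_one, div_one]
    norm_cast
    rw [Int.floor_intCast, mul_one]
  · rw [Int.cast_ofNat, mul_div_cancel_left₀ _ two_ne_zero, Int.floor_intCast, mul_comm]

theorem IsPositiveRoot.pairing_add_zsmul (hv : IsPositiveRoot v) (x : ZLat d) (c : ℤ) :
    pairing (halfCoroot v) (x + c • v) = pairing (halfCoroot v) x + 2 * c := by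
  refine mul_right_cancel₀ hv.sq_length_pos.ne' ?_
  rw [add_mul, hv.pairing_mul, hv.pairing_mul, dotProduct_add, dotProduct_smul, smul_eq_mul]
  ring

/-- The line of direction `v` through a point, as a coset of `ℤv`. -/
def lineMap (v : ZLat d) : ZLat d → ZLat d ⧸ AddSubgroup.zmultiples v := (↑)

theorem lineMap_eq_iff {x y : ZLat d} : lineMap v x = lineMap v y ↔ ∃ c : ℤ, y = x + c • v := by
  simp only [lineMap, QuotientAddGroup.eq, AddSubgroup.mem_zmultiples_iff, eq_neg_add_iff_add_eq,
    eq_comm (a := y)]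

/-- The position of `x` on its line of direction `v`, in the order `0, 1, -1, 2, -2, …`. -/
def linePos (v x : ZLat d) : ℕ := posIdx (pairing (halfCoroot v) x)

theorem IsPositiveRoot.isFiberwiseEnumeration (hv : IsPositiveRoot v) :
    IsFiberwiseEnumeration (lineMap v) (linePos v) := by
  intro q
  obtain ⟨x, rfl⟩ : ∃ x, lineMap v x = q := QuotientAddGroup.mk_surjective q
  have hline : lineMap v ⁻¹' {lineMap v x} = Set.range fun c : ℤ => x + c • v := by
    ext y
    simp only [Set.mem_preimage, Set.mem_singleton_iff, eq_comm (a := lineMap v y),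
      lineMap_eq_iff, Set.mem_range, eq_comm (a := y)]
  have hpos (c : ℤ) : linePos v (x + c • v) = posIdx (pairing (halfCoroot v) x + 2 * c) := by
    rw [linePos, hv.pairing_add_zsmul]
  rw [hline]
  refine ⟨fun y _ => one_le_posIdx _, ?_, fun n hn => ?_⟩
  · rintro _ ⟨c, rfl⟩ _ ⟨c', rfl⟩ h
    simp only [hpos] at h
    rw [posIdx_add_two_mul_injective _ h]
  · obtain ⟨c, hc⟩ := exists_posIdx_add_two_mul_eq (pairing (halfCoroot v) x) hn
    exact ⟨_, ⟨c, rfl⟩, (hpos c).trans hc⟩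

theorem IsPositiveRoot.superlevel_stepR (hv : IsPositiveRoot v) {u : ZLat d → NNReal}
    (hu : Admissible u) (t : NNReal) :
    {x | t < stepR (halfCoroot v) u x} = compress (lineMap v) (linePos v) {x | t < u x} := by
  ext x
  have hline : {y | sameLine (halfCoroot v) x y} = lineMap v ⁻¹' {lineMap v x} := by
    ext y
    rw [Set.mem_ofPred_eq, hv.sameLine_iff, ← lineMap_eq_iff, eq_comm]
    rfl
  exact (lt_nthLargest_subtype_iff hu.bddAbove_range
    (Nat.one_le_iff_ne_zero.1 (one_le_posIdx _)) t _).trans (by rw [hline]; rfl)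

/-- The squared distance, scaled by `(2 * d + 1) ^ 2`, of `x` to the point
`dominantWeight d / (2 * d + 1)`, which lies in the open fundamental alcove. On every line the
positions `0, 1, -1, 2, -2, …` are ordered by increasing distance to it. -/
def alcoveDistSq (x : ZLat d) : ℕ :=
  (((2 * d + 1 : ℤ) • x - dominantWeight d) ⬝ᵥ ((2 * d + 1 : ℤ) • x - dominantWeight d)).toNat

theorem coe_alcoveDistSq (x : ZLat d) :
    (alcoveDistSq x : ℤ) =
      ((2 * d + 1 : ℤ) • x - dominantWeight d) ⬝ᵥ ((2 * d + 1 : ℤ) • x - dominantWeight d) :=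
  Int.toNat_of_nonneg (Finset.sum_nonneg fun _ _ => mul_self_nonneg _)

theorem IsPositiveRoot.alcoveDistSq_add_zsmul (hv : IsPositiveRoot v) (x : ZLat d) (c : ℤ) :
    (alcoveDistSq (x + c • v) : ℤ) = alcoveDistSq x + (2 * d + 1) * (c *
      ((2 * d + 1) * (v ⬝ᵥ v) * (pairing (halfCoroot v) x + c) - 2 * (dominantWeight d ⬝ᵥ v))) := by
  have hm := hv.pairing_mul x
  simp only [coe_alcoveDistSq, smul_add, sub_dotProduct, dotProduct_sub, add_dotProduct,
    dotProduct_add, smul_dotProduct, dotProduct_smul, smul_eq_mul, dotProduct_comm x v,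
    dotProduct_comm x (dominantWeight d), dotProduct_comm v (dominantWeight d)]
  linear_combination -((2 * d + 1 : ℤ) ^ 2 * c) * hm

theorem IsPositiveRoot.alcoveDistSq_lt (hv : IsPositiveRoot v) {x y : ZLat d}
    (hxy : lineMap v x = lineMap v y) (h : linePos v x < linePos v y) :
    alcoveDistSq x < alcoveDistSq y := by
  obtain ⟨c, rfl⟩ := lineMap_eq_iff.1 hxy
  rw [linePos, linePos, hv.pairing_add_zsmul] at h
  zify
  rw [hv.alcoveDistSq_add_zsmul, lt_add_iff_pos_right]
  set m := pairing (halfCoroot v) x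
  have hweight : 2 * (dominantWeight d ⬝ᵥ v) < (2 * d + 1) * (v ⬝ᵥ v) := by
    linarith [dominantWeight_dotProduct_le v, hv.sq_length_pos]
  have hN : 0 < (2 * d + 1 : ℤ) * (v ⬝ᵥ v) := mul_pos (by positivity) hv.sq_length_pos
  refine mul_pos (by positivity) ?_
  rcases posIdx_lt_posIdx_add_two_mul h with ⟨hc, hmc⟩ | ⟨hc, hmc⟩
  · exact mul_pos hc (by nlinarith)
  · exact mul_pos_of_neg_of_neg hc (by nlinarith [hv.weight_pos])

end Geometry

section Iteration

variable {d : ℕ} {e : Fin d → ℝ} {u : ZLat d → NNReal}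

theorem equimeasurable_stepR (he : e ∈ Evec d) (hu : Admissible u) :
    Equimeasurable u (stepR e u) := by
  obtain ⟨v, hv, rfl⟩ := exists_isPositiveRoot_of_mem_Evec he
  intro t ht
  rw [hv.superlevel_stepR hu]
  exact hv.isFiberwiseEnumeration.nonempty_equiv_compress (hu t ht)

theorem finsum_alcoveDistSq_stepR_lt (he : e ∈ Evec d) (hu : Admissible u) {t : NNReal}
    (ht : 0 < t) (hne : {x | t < stepR e u x} ≠ {x | t < u x}) :
    ∑ᶠ x ∈ {x | t < stepR e u x}, alcoveDistSq x < ∑ᶠ x ∈ {x | t < u x}, alcoveDistSq x := by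
  obtain ⟨v, hv, rfl⟩ := exists_isPositiveRoot_of_mem_Evec he
  rw [hv.superlevel_stepR hu] at hne ⊢
  exact hv.isFiberwiseEnumeration.finsum_compress_lt (fun _ _ => hv.alcoveDistSq_lt) (hu t ht) hne

theorem stmt6_general {w : ℕ → ZLat d → NNReal} (hw₀ : Admissible (w 0))
    (hw : ∀ k, ∃ e ∈ Evec d, w (k + 1) = stepR e (w k)) :
    ∃ v, (∀ x, Tendsto (w · x) atTop (𝓝 (v x))) ∧ Equimeasurable (w 0) v := by
  have hequi (k : ℕ) : Equimeasurable (w 0) (w k) := by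
    induction k with
    | zero => exact fun t _ => ⟨Equiv.refl _⟩
    | succ k ih =>
      obtain ⟨e, he, hk⟩ := hw k
      exact hk ▸ ih.trans (equimeasurable_stepR he (ih.admissible hw₀))
  refine hw₀.exists_tendsto_equimeasurable hequi fun t ht =>
    eventuallyConst_of_ne_imp_lt (fun S : Set (ZLat d) => ∑ᶠ x ∈ S, alcoveDistSq x) fun k hne => ?_
  obtain ⟨e, he, hk⟩ := hw k
  rw [hk] at hne ⊢
  exact finsum_alcoveDistSq_stepR_lt he ((hequi k).admissible hw₀) ht hne

theorem mem_Evec_of_mem_EvecList (he : e ∈ EvecList d) : e ∈ Evec d := by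
  simp only [EvecList, List.mem_append, List.mem_map, List.mem_flatMap, List.mem_filterMap,
    List.mem_finRange, true_and, Option.ite_none_right_eq_some, Option.some.injEq] at he
  simp only [Evec, Set.mem_ofPred_eq]
  grind

theorem getD_EvecList_mem_Evec (hd : d ≠ 0) (k : ℕ) :
    (EvecList d).getD (k % (EvecList d).length) 0 ∈ Evec d := by
  have hlen : 0 < (EvecList d).length := by
    simp only [EvecList, List.length_append, List.length_map, List.length_finRange]
    lia
  rw [List.getD_eq_getElem _ _ (k.mod_lt hlen)]
  exact mem_Evec_of_mem_EvecList (List.getElem_mem _)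

end Iteration

/-- An admissible function on ℤ^d (d ≥ 2) is equimeasurable with its Schwarz
rearrangement. -/
theorem stmt6 (d : ℕ) (hd : 2 ≤ d) (u : ZLat d → NNReal) (hu : Admissible u) :
    ∀ t : NNReal, 0 < t → Nonempty ({x | t < u x} ≃ {x | t < RZd d u x}) := by
  obtain ⟨v, hv, huv⟩ := stmt6_general (w := iterR d u) hu fun k =>
    ⟨_, getD_EvecList_mem_Evec (by lia) k, rfl⟩
  exact (funext fun x => (hv x).limUnder_eq : RZd d u = v) ▸ huv

end
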